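/- arXiv:1608.06868 — 2 statements merged into one kernel-verified Lean document; each statement's English description precedes it below -/
import Mathlib

section
/- Let n ≥ 2 with smallest prime factor p = P₁(n), and suppose p ≤ n−2. Then there exist two distinct p-element subsets of the n-th roots of unity with equal sums, and for every k with 1 ≤ k < p there do NOT exist two distinct k-element subsets of the n-th roots of unity with equal sums. -/
open Polynomial in
/-- Power sums of `n`-th roots of unity are Galois-conjugate for exponents coprime to `n`. -/
theorem sum_pow_eq_of_sum_eq_of_coprime {n r : ℕ} (hn : n ≠ 0) (hr : r.Coprime n)
    {S T : Finset ℂ} (hS : ∀ z ∈ S, z ^ n = 1) (hT : ∀ z ∈ T, z ^ n = 1)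
    (h : ∑ z ∈ S, z = ∑ z ∈ T, z) : ∑ z ∈ S, z ^ r = ∑ z ∈ T, z ^ r := by
  have : NeZero n := ⟨hn⟩
  have hζ := Complex.isPrimitiveRoot_exp n hn
  set ζ := Complex.exp (2 * Real.pi * Complex.I / n)
  have hex : ∀ z : ℂ, ∃ i : ℕ, z ^ n = 1 → ζ ^ i = z := fun z ↦ by
    by_cases hz : z ^ n = 1
    · obtain ⟨i, -, hi⟩ := hζ.eq_pow_of_pow_eq_one hz
      exact ⟨i, fun _ ↦ hi⟩
    · exact ⟨0, fun h ↦ absurd h hz⟩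
  choose e he using hex
  have eval_pow (U : Finset ℂ) (hU : ∀ z ∈ U, z ^ n = 1) (m : ℕ) :
      aeval (ζ ^ m) (∑ z ∈ U, (X : ℤ[X]) ^ e z) = ∑ z ∈ U, z ^ m := by
    rw [map_sum]
    refine Finset.sum_congr rfl fun z hz ↦ ?_
    rw [map_pow, aeval_X, ← pow_mul, mul_comm, pow_mul, he z (hU z hz)]
  have hdvd : minpoly ℤ ζ ∣ ∑ z ∈ S, (X : ℤ[X]) ^ e z - ∑ z ∈ T, X ^ e z := by
    refine minpoly.isIntegrallyClosed_dvd (hζ.isIntegral hn.bot_lt) ?_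
    have hS1 := eval_pow S hS 1
    have hT1 := eval_pow T hT 1
    simp only [pow_one] at hS1 hT1
    rw [map_sub, hS1, hT1, h, sub_self]
  rw [hζ.minpoly_eq_pow_coprime hr] at hdvd
  have hzero := aeval_eq_zero_of_dvd_aeval_eq_zero hdvd (minpoly.aeval ℤ (ζ ^ r))
  rwa [map_sub, eval_pow S hS, eval_pow T hT, sub_eq_zero] at hzero

/-- In characteristic zero, power sums determine elementary symmetric functions. -/
theorem aeval_esymm_eq_of_aeval_psum_eq {σ K : Type*} [Fintype σ] [Field K] [CharZero K]
    {f g : σ → K} {m : ℕ} (h : ∀ r, 1 ≤ r → r ≤ m → ∑ i, f i ^ r = ∑ i, g i ^ r) :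
    MvPolynomial.aeval f (MvPolynomial.esymm σ ℤ m) =
      MvPolynomial.aeval g (MvPolynomial.esymm σ ℤ m) := by
  classical
  induction m using Nat.strong_induction_on with
  | _ m ih =>
    rcases Nat.eq_zero_or_pos m with rfl | hm
    · simp
    have newton := MvPolynomial.mul_esymm_eq_sum σ ℤ m
    have hf := congrArg (MvPolynomial.aeval f) newton
    have hg := congrArg (MvPolynomial.aeval g) newton
    have hm' : (m : K) ≠ 0 := by exact_mod_cast hm.ne'
    apply mul_left_cancel₀ hm'
    simp only [map_mul, map_natCast, map_sum, map_pow, map_neg, map_one] at hf hg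
    rw [hf, hg]
    congr 1
    refine Finset.sum_congr rfl fun a ha ↦ ?_
    rw [Finset.mem_filter, Finset.HasAntidiagonal.mem_antidiagonal] at ha
    rw [ih a.1 ha.2 fun r h1 h2 ↦ h r h1 (by omega)]
    congr 1
    simpa [MvPolynomial.psum] using h a.2 (by omega) (by omega)

/-- Finite sets of size `k` in a field of characteristic zero are determined by their
first `k` power sums. -/
theorem Finset.eq_of_sum_pow_eq {K : Type*} [Field K] [CharZero K] {S T : Finset K} {k : ℕ}
    (hS : S.card = k) (hT : T.card = k)
    (h : ∀ r, 1 ≤ r → r ≤ k → ∑ z ∈ S, z ^ r = ∑ z ∈ T, z ^ r) : S = T := by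
  let eS := (S.equivFinOfCardEq hS).symm
  let eT := (T.equivFinOfCardEq hT).symm
  have sum_coe (U : Finset K) (e : Fin k ≃ U) (r : ℕ) :
      ∑ i, (e i : K) ^ r = ∑ z ∈ U, z ^ r := by
    rw [e.sum_comp fun z : U ↦ (z : K) ^ r]
    exact Finset.sum_coe_sort U fun z ↦ z ^ r
  have map_coe (U : Finset K) (e : Fin k ≃ U) :
      Finset.univ.val.map (fun i ↦ (e i : K)) = U.val := by
    have : Finset.univ.map (e.toEmbedding.trans (Function.Embedding.subtype _)) = U := by
      ext z
      simp only [Finset.mem_map, Finset.mem_univ, true_and]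
      exact ⟨fun ⟨i, hi⟩ ↦ hi ▸ (e i).2, fun hz ↦ ⟨e.symm ⟨z, hz⟩, by simp⟩⟩
    exact congrArg Finset.val this
  have hesymm : ∀ m ≤ k, S.val.esymm m = T.val.esymm m := fun m hm ↦ by
    have := aeval_esymm_eq_of_aeval_psum_eq (f := fun i ↦ (eS i : K)) (g := fun i ↦ (eT i : K))
      (m := m) fun r h1 h2 ↦ by rw [sum_coe, sum_coe, h r h1 (h2.trans hm)]
    rwa [MvPolynomial.aeval_esymm_eq_multiset_esymm, MvPolynomial.aeval_esymm_eq_multiset_esymm,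
      map_coe, map_coe] at this
  have hprod : (S.val.map fun z ↦ Polynomial.X - Polynomial.C z).prod =
      (T.val.map fun z ↦ Polynomial.X - Polynomial.C z).prod := by
    rw [Multiset.prod_X_sub_X_eq_sum_esymm, Multiset.prod_X_sub_X_eq_sum_esymm,
      Finset.card_val, Finset.card_val, hS, hT]
    refine Finset.sum_congr rfl fun j hj ↦ ?_
    rw [hesymm j (by simpa [Nat.lt_succ_iff] using hj)]
  have hroots := congrArg Polynomial.roots hprod
  rw [Polynomial.roots_multiset_prod_X_sub_C, Polynomial.roots_multiset_prod_X_sub_C] at hroots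
  exact Finset.val_injective hroots

/-- If `p > 1` is a proper divisor of `n`, two cosets of the `p`-th roots of unity are distinct
sets of `n`-th roots of unity with vanishing sum. -/
theorem exists_ne_sum_eq_of_dvd {n p : ℕ} (hp : 1 < p) (hpn : p ∣ n) (hlt : p < n) :
    ∃ S T : Finset ℂ, S ≠ T ∧ S.card = p ∧ T.card = p ∧
      (∀ z ∈ S, z ^ n = 1) ∧ (∀ z ∈ T, z ^ n = 1) ∧ ∑ z ∈ S, z = ∑ z ∈ T, z := by
  have hζ := Complex.isPrimitiveRoot_exp n (by omega)
  have hω := Complex.isPrimitiveRoot_exp p (by omega)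
  set ζ := Complex.exp (2 * Real.pi * Complex.I / n)
  set ω := Complex.exp (2 * Real.pi * Complex.I / p)
  have hζ0 : ζ ≠ 0 := Complex.exp_ne_zero _
  have hω0 : ∑ z ∈ Polynomial.nthRootsFinset p (1 : ℂ), z = 0 := by
    rw [← hω.geom_sum_eq_zero hp]
    refine (Finset.sum_bij (fun i _ ↦ ω ^ i) ?_ ?_ ?_ ?_).symm
    · intro i _
      rw [Polynomial.mem_nthRootsFinset (by omega), ← pow_mul, mul_comm, pow_mul,
        hω.pow_eq_one, one_pow]
    · intro i hi j hj hij
      exact hω.pow_inj (Finset.mem_range.1 hi) (Finset.mem_range.1 hj) hij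
    · intro z hz
      rw [Polynomial.mem_nthRootsFinset (by omega)] at hz
      have : NeZero p := ⟨by omega⟩
      obtain ⟨i, hi, rfl⟩ := hω.eq_pow_of_pow_eq_one hz
      exact ⟨i, Finset.mem_range.2 hi, rfl⟩
    · intro i _
      rfl
  have hpow : ∀ z ∈ Polynomial.nthRootsFinset p (1 : ℂ), z ^ n = 1 := fun z hz ↦ by
    rw [Polynomial.mem_nthRootsFinset (by omega)] at hz
    obtain ⟨m, rfl⟩ := hpn
    rw [pow_mul, hz, one_pow]
  refine ⟨Polynomial.nthRootsFinset p 1,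
    (Polynomial.nthRootsFinset p 1).map (Equiv.mulLeft₀ ζ hζ0).toEmbedding, ?_,
    hω.card_nthRootsFinset, by rw [Finset.card_map, hω.card_nthRootsFinset], hpow, ?_, ?_⟩
  · intro heq
    have hmem : ζ ∈ Polynomial.nthRootsFinset p (1 : ℂ) := by
      rw [heq, Finset.mem_map]
      exact ⟨1, by simp [Polynomial.mem_nthRootsFinset (show 0 < p by omega)], by simp⟩
    rw [Polynomial.mem_nthRootsFinset (by omega)] at hmem
    exact hζ.pow_ne_one_of_pos_of_lt (by omega) hlt hmem
  · intro z hz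
    obtain ⟨w, hw, rfl⟩ := Finset.mem_map.1 hz
    simp [mul_pow, hζ.pow_eq_one, hpow w hw]
  · rw [Finset.sum_map, hω0]
    simpa [hω0] using (Finset.mul_sum (Polynomial.nthRootsFinset p (1 : ℂ)) id ζ)

theorem min_coalescence_is_min_prime_factor (n : ℕ) (hn : 2 ≤ n)
    (hp : n.minFac ≤ n - 2) :
    (∃ S T : Finset ℂ, S ≠ T ∧ S.card = n.minFac ∧ T.card = n.minFac ∧
      (∀ z ∈ S, z ^ n = 1) ∧ (∀ z ∈ T, z ^ n = 1) ∧ ∑ z ∈ S, z = ∑ z ∈ T, z) ∧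
    (∀ k : ℕ, 1 ≤ k → k < n.minFac →
      ¬ ∃ S T : Finset ℂ, S ≠ T ∧ S.card = k ∧ T.card = k ∧
        (∀ z ∈ S, z ^ n = 1) ∧ (∀ z ∈ T, z ^ n = 1) ∧ ∑ z ∈ S, z = ∑ z ∈ T, z) := by
  refine ⟨exists_ne_sum_eq_of_dvd (Nat.minFac_prime (by omega)).one_lt n.minFac_dvd (by omega), ?_⟩
  rintro k - hk ⟨S, T, hne, hSc, hTc, hS, hT, hsum⟩
  refine hne (Finset.eq_of_sum_pow_eq hSc hTc fun r h1 h2 ↦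
    sum_pow_eq_of_sum_eq_of_coprime (by omega) ?_ hS hT hsum)
  exact (Nat.coprime_of_lt_minFac (by omega) (by omega)).symm
end

section
/- With ñ_k defined by ñ_k = k−1 if k is prime and ñ_k = 2(P₁(k)−1) if k is composite, the partial sums satisfy Σ_{k=2}^{n} ñ_k ∼ n²/(2 log n) as n → ∞; consequently (2/(n²−n)) Σ_{k=2}^{n} ñ_k → 0, i.e., non-coalescing Grassmannians have density zero. -/
open Filter

/-- Number of non-coalescing Grassmannians of proper subspaces of `ℂ^k`, for `k ≥ 2`. -/
def tn (k : ℕ) : ℕ := if k.Prime then k - 1 else 2 * (k.minFac - 1)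

section FejerKernel

/-- The triangle function, whose Fourier transform is the Fejér kernel `sinc (t / 2) ^ 2`. -/
noncomputable def triangle (y : ℝ) : ℝ := max 0 (1 - |y|)

lemma continuous_triangle : Continuous triangle := by
  unfold triangle; fun_prop

lemma triangle_eq_zero {y : ℝ} (hy : 1 ≤ |y|) : triangle y = 0 :=
  max_eq_left (by linarith)

lemma triangle_of_mem_Icc {y : ℝ} (h0 : 0 ≤ y) (h1 : y ≤ 1) : triangle y = 1 - y := by
  rw [triangle, abs_of_nonneg h0, max_eq_right (by linarith)]

lemma triangle_neg (y : ℝ) : triangle (-y) = triangle y := by simp [triangle]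

lemma hasCompactSupport_triangle : HasCompactSupport triangle := by
  refine HasCompactSupport.intro (isCompact_Icc (a := (-1 : ℝ)) (b := 1)) fun y hy ↦ ?_
  refine triangle_eq_zero ?_
  by_contra! h
  exact hy ⟨(abs_lt.mp h).1.le, (abs_lt.mp h).2.le⟩

lemma integral_one_sub_mul_cos (t : ℝ) :
    ∫ y in (0 : ℝ)..1, 2 * ((1 - y) * Real.cos (t * y)) = Real.sinc (t / 2) ^ 2 := by
  rcases eq_or_ne t 0 with rfl | ht
  · simp only [zero_mul, Real.cos_zero, mul_one, zero_div, Real.sinc_zero]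
    rw [intervalIntegral.integral_const_mul, intervalIntegral.integral_sub (by simp) (by simp)]
    norm_num
  have hderiv : ∀ y ∈ Set.uIcc (0 : ℝ) 1,
      HasDerivAt (fun y ↦ 2 * ((1 - y) * Real.sin (t * y) / t - Real.cos (t * y) / t ^ 2))
        (2 * ((1 - y) * Real.cos (t * y))) y := by
    intro y _
    have hlin : HasDerivAt (fun y : ℝ ↦ t * y) t y := by
      simpa using (hasDerivAt_id y).const_mul t
    have hsub : HasDerivAt (fun y : ℝ ↦ 1 - y) (-1) y := by
      simpa using (hasDerivAt_id y).const_sub 1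
    convert! ((((hsub.mul hlin.sin).div_const t).sub (hlin.cos.div_const (t ^ 2))).const_mul 2)
      using 1
    field
  rw [intervalIntegral.integral_eq_sub_of_hasDerivAt hderiv
    (Continuous.intervalIntegrable (by fun_prop) _ _),
    Real.sinc_of_ne_zero (div_ne_zero ht two_ne_zero)]
  have hcos : Real.cos t = 1 - 2 * Real.sin (t / 2) ^ 2 := by
    have := Real.cos_two_mul (t / 2)
    rw [Real.cos_sq', mul_div_cancel₀ _ two_ne_zero] at this
    linarith
  simp [hcos]
  field

lemma integral_triangle_mul_cexp (t : ℝ) :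
    ∫ y : ℝ, (triangle y : ℂ) * Complex.exp (t * y * Complex.I) =
      ((Real.sinc (t / 2) ^ 2 : ℝ) : ℂ) := by
  set h : ℝ → ℂ := fun y ↦ (triangle y : ℂ) * Complex.exp (t * y * Complex.I)
  have hcont : Continuous h := by
    have := continuous_triangle
    fun_prop
  have hint (a b : ℝ) : IntervalIntegrable h MeasureTheory.volume a b :=
    hcont.intervalIntegrable a b
  have hsupp : ∀ y ∉ Set.Ioc (-1 : ℝ) 1, h y = 0 := by
    intro y hy
    have : triangle y = 0 := by
      refine triangle_eq_zero ?_
      by_contra! hlt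
      exact hy ⟨(abs_lt.mp hlt).1, (abs_lt.mp hlt).2.le⟩
    simp [h, this]
  rw [← MeasureTheory.setIntegral_eq_integral_of_forall_compl_eq_zero hsupp,
    ← intervalIntegral.integral_of_le (by norm_num),
    ← intervalIntegral.integral_add_adjacent_intervals (hint (-1) 0) (hint 0 1)]
  have hneg : ∫ y in (-1 : ℝ)..0, h y = ∫ y in (0 : ℝ)..1, h (-y) := by
    rw [intervalIntegral.integral_comp_neg]; simp
  have hint_neg : IntervalIntegrable (fun y ↦ h (-y)) MeasureTheory.volume 0 1 :=
    (hcont.comp continuous_neg).intervalIntegrable 0 1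
  rw [hneg, ← intervalIntegral.integral_add hint_neg (hint 0 1),
    ← integral_one_sub_mul_cos, ← intervalIntegral.integral_ofReal]
  refine intervalIntegral.integral_congr fun y hy ↦ ?_
  rw [Set.uIcc_of_le zero_le_one] at hy
  simp only [h, triangle_neg, triangle_of_mem_Icc hy.1 hy.2]
  push_cast
  rw [Complex.cos]
  ring_nf

lemma integrable_sinc_sq : MeasureTheory.Integrable fun t : ℝ ↦ Real.sinc (t / 2) ^ 2 := by
  refine (integrable_inv_one_add_sq.const_mul 5).mono' ?_ (.of_forall fun t ↦ ?_)
  · have := Real.continuous_sinc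
    exact Continuous.aestronglyMeasurable (by fun_prop)
  · rw [Real.norm_of_nonneg (sq_nonneg _), ← div_eq_mul_inv, le_div_iff₀ (by positivity)]
    have h1 : Real.sinc (t / 2) ^ 2 ≤ 1 := by
      rw [sq_le_one_iff_abs_le_one]; exact Real.abs_sinc_le_one _
    have h2 : Real.sinc (t / 2) ^ 2 * t ^ 2 ≤ 4 := by
      rcases eq_or_ne t 0 with rfl | ht
      · simp
      rw [Real.sinc_of_ne_zero (div_ne_zero ht two_ne_zero)]
      have := Real.sin_sq_le_one (t / 2)
      field_simp
      linarith
    linarith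

lemma integral_sinc_sq_pos : 0 < ∫ t : ℝ, Real.sinc (t / 2) ^ 2 := by
  rw [MeasureTheory.integral_pos_iff_support_of_nonneg (fun t ↦ sq_nonneg _) integrable_sinc_sq]
  have := Real.continuous_sinc
  have hcont : Continuous fun t : ℝ ↦ Real.sinc (t / 2) ^ 2 := by fun_prop
  refine hcont.isOpen_support.measure_pos _ ⟨0, ?_⟩
  simp

end FejerKernel

section Tauberian

open MeasureTheory Topology

variable {f k w : ℝ → ℝ} {M : ℝ} {Φ : ℂ → ℂ}

lemma integrable_mul_cexp_neg (hfm : Measurable f) (hM : ∀ t, |f t| ≤ M)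
    (hf0 : ∀ t ≤ 0, f t = 0) {s : ℂ} (hs : 0 < s.re) :
    Integrable fun t : ℝ ↦ (f t : ℂ) * Complex.exp (-s * t) := by
  have hon : IntegrableOn (fun t : ℝ ↦ (f t : ℂ) * Complex.exp (-s * t)) (Set.Ioi 0) :=
    (integrableOn_exp_mul_complex_Ioi (by simpa using hs) 0).bdd_mul (c := M)
      hfm.complex_ofReal.aestronglyMeasurable (.of_forall fun t ↦ by simpa using hM t)
  refine (integrableOn_iff_integrable_of_support_subset fun t ht ↦ ?_).mp hon
  by_contra hle
  exact ht (by simp [hf0 t (not_lt.mp hle)])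

lemma integral_fourier_laplace_swap (hfm : Measurable f) (hM : ∀ t, |f t| ≤ M)
    (hf0 : ∀ t ≤ 0, f t = 0)
    (hΦ : ∀ s : ℂ, 0 < s.re → ∫ t : ℝ, (f t : ℂ) * Complex.exp (-s * t) = Φ s)
    (hw : Continuous w) (hws : HasCompactSupport w)
    (hwk : ∀ t : ℝ, ∫ y : ℝ, (w y : ℂ) * Complex.exp (t * y * Complex.I) = k t)
    (u : ℝ) {σ : ℝ} (hσ : 0 < σ) :
    ∫ y : ℝ, (w y : ℂ) * Complex.exp (u * y * Complex.I) * Φ (σ + y * Complex.I) =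
      ∫ t : ℝ, (f t : ℂ) * Complex.exp (-σ * t) * k (u - t) := by
  have hwint : Integrable fun y : ℝ ↦ (w y : ℂ) :=
    (hw.integrable_of_hasCompactSupport hws).ofReal
  have hfint : Integrable fun t : ℝ ↦ (f t : ℂ) * Complex.exp (-σ * t) :=
    integrable_mul_cexp_neg hfm hM hf0 (by simpa using hσ)
  have hprod : Integrable (Function.uncurry fun (y t : ℝ) ↦
      (f t : ℂ) * Complex.exp (-σ * t) * ((w y : ℂ) * Complex.exp ((u - t) * y * Complex.I)))
      (volume.prod volume) := by
    have := (hwint.mul_prod hfint).bdd_mul (c := 1)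
      (f := fun z : ℝ × ℝ ↦ Complex.exp ((u - z.2) * z.1 * Complex.I))
      (Continuous.aestronglyMeasurable (by fun_prop)) (.of_forall fun z ↦ by
        have := Complex.norm_exp_ofReal_mul_I ((u - z.2) * z.1)
        push_cast at this
        exact this.le)
    refine this.congr (.of_forall fun z ↦ ?_)
    simp only [Function.uncurry]
    ring
  have hswap := integral_integral_swap hprod
  calc _ = ∫ y : ℝ, ∫ t : ℝ, (f t : ℂ) * Complex.exp (-σ * t) *
        ((w y : ℂ) * Complex.exp ((u - t) * y * Complex.I)) := by
        refine integral_congr_ae (.of_forall fun y ↦ ?_)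
        simp only
        rw [← hΦ _ (by simpa using hσ), ← integral_const_mul]
        refine integral_congr_ae (.of_forall fun t ↦ ?_)
        simp only
        rw [show (-(σ + y * Complex.I) * t : ℂ) = -σ * t + -(t * y * Complex.I) by ring,
          show ((u - t) * y * Complex.I : ℂ) = u * y * Complex.I + -(t * y * Complex.I) by ring,
          Complex.exp_add, Complex.exp_add]
        ring
    _ = _ := by
        rw [hswap]
        refine integral_congr_ae (.of_forall fun t ↦ ?_)
        simp only
        rw [integral_const_mul, ← hwk]
        push_cast
        rfl

/-- If the Laplace transform of a bounded function `f` extends continuously to the closed right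
half-plane, then the convolution of `f` with the Fourier transform of a compactly supported
continuous function vanishes at infinity. -/
theorem tendsto_convolution_of_laplace (hfm : Measurable f) (hM : ∀ t, |f t| ≤ M)
    (hf0 : ∀ t ≤ 0, f t = 0) (hΦc : ContinuousOn Φ {s | 0 ≤ s.re})
    (hΦ : ∀ s : ℂ, 0 < s.re → ∫ t : ℝ, (f t : ℂ) * Complex.exp (-s * t) = Φ s)
    (hw : Continuous w) (hws : HasCompactSupport w) (hk : Integrable k)
    (hwk : ∀ t : ℝ, ∫ y : ℝ, (w y : ℂ) * Complex.exp (t * y * Complex.I) = k t) :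
    Tendsto (fun u ↦ ∫ v : ℝ, f (u - v) * k v) atTop (𝓝 0) := by
  have hΦline (σ : ℝ) (hσ : 0 ≤ σ) : Continuous fun y : ℝ ↦ Φ (σ + y * Complex.I) :=
    hΦc.comp_continuous (by fun_prop) fun y ↦ by simpa using hσ
  have hboundary (u : ℝ) :
      ∫ y : ℝ, (w y : ℂ) * Complex.exp (u * y * Complex.I) * Φ (y * Complex.I) =
        ∫ t : ℝ, (f t : ℂ) * k (u - t) := by
    have hR : Tendsto (fun σ : ℝ ↦ ∫ t : ℝ, (f t : ℂ) * Complex.exp (-σ * t) * k (u - t))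
        (𝓝[>] 0) (𝓝 (∫ t : ℝ, (f t : ℂ) * k (u - t))) := by
      have hku : Integrable fun t ↦ k (u - t) := hk.comp_sub_left u
      refine tendsto_integral_filter_of_dominated_convergence (fun t ↦ M * ‖k (u - t)‖)
        (.of_forall fun σ ↦ ?_) ?_ (hku.norm.const_mul M) (.of_forall fun t ↦ ?_)
      · exact (hfm.complex_ofReal.aestronglyMeasurable.mul
          (Continuous.aestronglyMeasurable (by fun_prop))).mul hku.ofReal.aestronglyMeasurable
      · filter_upwards [self_mem_nhdsWithin] with σ hσ
        refine .of_forall fun t ↦ ?_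
        rw [norm_mul, norm_mul, Complex.norm_real, Complex.norm_real]
        gcongr
        rcases le_or_gt t 0 with ht | ht
        · simpa [hf0 t ht] using (abs_nonneg _).trans (hM t)
        · have : ‖Complex.exp (-σ * t)‖ ≤ 1 := by
            rw [Complex.norm_exp]
            simpa using (mul_pos hσ ht).le
          calc _ ≤ ‖f t‖ * 1 := by gcongr
            _ ≤ M := by simpa using hM t
      · have : Continuous fun σ : ℝ ↦ (f t : ℂ) * Complex.exp (-σ * t) * k (u - t) := by fun_prop
        simpa using (this.tendsto 0).mono_left nhdsWithin_le_nhds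
    obtain ⟨C, hC⟩ : ∃ C, ∀ σ ∈ Set.Icc (0 : ℝ) 1, ∀ y ∈ tsupport w,
        ‖Φ (σ + y * Complex.I)‖ ≤ C := by
      have hcomp : ContinuousOn (fun z : ℝ × ℝ ↦ Φ (z.1 + z.2 * Complex.I))
          (Set.Icc (0 : ℝ) 1 ×ˢ tsupport w) :=
        hΦc.comp (by fun_prop) fun z hz ↦ by simpa using hz.1.1
      obtain ⟨C, hC⟩ := (isCompact_Icc.prod hws).exists_bound_of_continuousOn hcomp
      exact ⟨C, fun σ hσ y hy ↦ hC (σ, y) ⟨hσ, hy⟩⟩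
    have hL : Tendsto (fun σ : ℝ ↦ ∫ y : ℝ, (w y : ℂ) * Complex.exp (u * y * Complex.I) *
        Φ (σ + y * Complex.I)) (𝓝[>] 0)
        (𝓝 (∫ y : ℝ, (w y : ℂ) * Complex.exp (u * y * Complex.I) * Φ (y * Complex.I))) := by
      refine tendsto_integral_filter_of_dominated_convergence (fun y ↦ ‖w y‖ * C)
        ?_ ?_ ((hw.integrable_of_hasCompactSupport hws).norm.mul_const C)
        (.of_forall fun y ↦ ?_)
      · filter_upwards [self_mem_nhdsWithin] with σ hσ
        have := hΦline σ (Set.mem_Ioi.mp hσ).le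
        exact (Continuous.mul (by fun_prop) this).aestronglyMeasurable
      · filter_upwards [Ioc_mem_nhdsGT (zero_lt_one (α := ℝ))] with σ hσ
        refine .of_forall fun y ↦ ?_
        have hexp := Complex.norm_exp_ofReal_mul_I (u * y)
        push_cast at hexp
        rw [norm_mul, norm_mul, Complex.norm_real, hexp, mul_one]
        by_cases hy : y ∈ tsupport w
        · gcongr
          exact hC σ ⟨hσ.1.le, hσ.2⟩ y hy
        · simp [image_eq_zero_of_notMem_tsupport hy]
      · refine Tendsto.const_mul _ ?_
        have h0 : ((0 : ℝ) + y * Complex.I : ℂ) ∈ {s : ℂ | 0 ≤ s.re} := by simp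
        have := (hΦc _ h0).tendsto.comp (tendsto_nhdsWithin_iff.mpr
          ⟨((by fun_prop : Continuous fun σ : ℝ ↦ (σ + y * Complex.I : ℂ)).tendsto 0).mono_left
            (nhdsWithin_le_nhds (s := Set.Ioi 0)), ?_⟩)
        · simpa [Function.comp_def] using this
        · filter_upwards [self_mem_nhdsWithin] with σ hσ
          simpa using (Set.mem_Ioi.mp hσ).le
    refine tendsto_nhds_unique (hL.congr' ?_) hR
    filter_upwards [self_mem_nhdsWithin] with σ hσ
    exact integral_fourier_laplace_swap hfm hM hf0 hΦ hw hws hwk u hσ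
  have hRL := Real.tendsto_integral_exp_smul_cocompact fun y ↦ (w y : ℂ) * Φ (y * Complex.I)
  have hlin : Tendsto (fun u : ℝ ↦ -u / (2 * Real.pi)) atTop (cocompact ℝ) :=
    (tendsto_neg_atTop_atBot.atBot_div_const (by positivity)).mono_right atBot_le_cocompact
  have hlim := (hRL.comp hlin).congr fun u ↦ show _ = ∫ t : ℝ, (f t : ℂ) * k (u - t) by
    rw [← hboundary]
    refine integral_congr_ae (.of_forall fun y ↦ ?_)
    simp only [Circle.smul_def, Real.fourierChar_apply, smul_eq_mul]
    rw [show 2 * Real.pi * -(y * (-u / (2 * Real.pi))) = u * y by field]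
    push_cast
    ring
  have hre : Tendsto (fun u ↦ ∫ t : ℝ, f t * k (u - t)) atTop (𝓝 0) := by
    refine ((Complex.continuous_re.tendsto 0).comp hlim).congr fun u ↦ ?_
    simp_rw [Function.comp_apply, ← Complex.ofReal_mul, integral_complex_ofReal, Complex.ofReal_re]
  refine hre.congr fun u ↦ ?_
  rw [← integral_sub_left_eq_self _ volume u]
  simp

lemma tendsto_integral_comp_div_mul_sinc_sq (hfm : Measurable f) (hM : ∀ t, |f t| ≤ M)
    (hf0 : ∀ t ≤ 0, f t = 0) (hΦc : ContinuousOn Φ {s | 0 ≤ s.re})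
    (hΦ : ∀ s : ℂ, 0 < s.re → ∫ t : ℝ, (f t : ℂ) * Complex.exp (-s * t) = Φ s)
    {r : ℝ} (hr : 0 < r) :
    Tendsto (fun u ↦ ∫ v : ℝ, f ((u - v) / r) * Real.sinc (v / 2) ^ 2) atTop (𝓝 0) := by
  refine tendsto_convolution_of_laplace (f := fun t ↦ f (t / r)) (Φ := fun s ↦ r * Φ (r * s))
    (hfm.comp (measurable_id.div_const r)) (fun t ↦ hM _)
    (fun t ht ↦ hf0 _ (div_nonpos_of_nonpos_of_nonneg ht hr.le)) ?_ (fun s hs ↦ ?_)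
    continuous_triangle hasCompactSupport_triangle integrable_sinc_sq integral_triangle_mul_cexp
  · refine continuousOn_const.mul (hΦc.comp (by fun_prop) fun s hs ↦ ?_)
    simpa using mul_nonneg hr.le hs
  · rw [← hΦ _ (by simpa using mul_pos hr hs)]
    have := Measure.integral_comp_div (fun t : ℝ ↦ (f t : ℂ) * Complex.exp (-(r * s) * t)) r
    rw [abs_of_pos hr, Complex.real_smul] at this
    rw [← this]
    refine integral_congr_ae (.of_forall fun t ↦ ?_)
    simp only
    have hr0 : (r : ℂ) ≠ 0 := by exact_mod_cast hr.ne'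
    congr 2
    push_cast
    field

lemma exists_tail_integral_lt (hk : Integrable k) {η : ℝ} (hη : 0 < η) :
    ∃ A > 0, ∫ v in {v : ℝ | A < |v|}, k v < η := by
  have hanti : Antitone fun A : ℝ ↦ {v : ℝ | A < |v|} := fun a b hab v hv ↦ hab.trans_lt hv
  have hlim := tendsto_setIntegral_of_antitone (f := k) (μ := volume)
    (fun A : ℝ ↦ measurableSet_lt measurable_const measurable_norm) hanti ⟨0, hk.integrableOn⟩
  have hempty : ⋂ A : ℝ, {v : ℝ | A < ‖v‖} = ∅ := by
    refine Set.eq_empty_of_forall_notMem fun v hv ↦ ?_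
    have h : ‖v‖ < ‖v‖ := Set.mem_iInter.mp hv ‖v‖
    exact lt_irrefl _ h
  rw [hempty, Measure.restrict_empty, integral_zero_measure] at hlim
  obtain ⟨A, hA, hA0⟩ := ((hlim.eventually_lt_const hη).and (eventually_gt_atTop 0)).exists
  exact ⟨A, hA0, hA⟩

lemma eventually_exists_near_lt (hfm : Measurable f) (hM : ∀ t, |f t| ≤ M)
    (hf0 : ∀ t ≤ 0, f t = 0) (hΦc : ContinuousOn Φ {s | 0 ≤ s.re})
    (hΦ : ∀ s : ℂ, 0 < s.re → ∫ t : ℝ, (f t : ℂ) * Complex.exp (-s * t) = Φ s)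
    {ε δ : ℝ} (hε : 0 < ε) (hδ : 0 < δ) :
    ∀ᶠ u in atTop, ∃ t, |t - u| ≤ δ ∧ f t < ε := by
  set K : ℝ → ℝ := fun v ↦ Real.sinc (v / 2) ^ 2 with hKdef
  have hK : Integrable K := integrable_sinc_sq
  have hKpos : 0 < ∫ v, K v := integral_sinc_sq_pos
  have hM0 : 0 ≤ M := (abs_nonneg _).trans (hM 0)
  obtain ⟨A, hA0, hA⟩ := exists_tail_integral_lt hK
    (show 0 < ε / 2 * (∫ v, K v) / (M + ε) by positivity)
  rw [lt_div_iff₀ (by positivity)] at hA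
  have hr : 0 < A / δ := by positivity
  have hlim := (tendsto_integral_comp_div_mul_sinc_sq hfm hM hf0 hΦc hΦ hr).comp
    (tendsto_id.atTop_mul_const hr)
  filter_upwards [hlim.eventually_lt_const (show 0 < ε / 2 * ∫ v, K v by positivity)] with u hu
  by_contra! hcon
  have hS : MeasurableSet {v : ℝ | A < |v|} := measurableSet_lt measurable_const measurable_norm
  have hlower : ∫ v, (ε * K v - (M + ε) * Set.indicator {v : ℝ | A < |v|} K v) ≤
      ∫ v, f ((u * (A / δ) - v) / (A / δ)) * K v := by
    refine integral_mono ((hK.const_mul ε).sub ((hK.indicator hS).const_mul _))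
      (hK.bdd_mul (c := M) (hfm.comp (by fun_prop)).aestronglyMeasurable
        (.of_forall fun v ↦ hM _)) fun v ↦ ?_
    have hKv : 0 ≤ K v := sq_nonneg _
    by_cases hv : A < |v|
    · rw [Set.indicator_of_mem (by exact hv)]
      nlinarith [neg_le_of_abs_le (hM ((u * (A / δ) - v) / (A / δ)))]
    · rw [Set.indicator_of_notMem (by exact hv)]
      have := hcon ((u * (A / δ) - v) / (A / δ)) (by
        rw [show (u * (A / δ) - v) / (A / δ) - u = -(v * δ / A) by field, abs_neg, abs_div, abs_mul,
          abs_of_pos hδ, abs_of_pos hA0, div_le_iff₀ hA0, mul_comm]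
        gcongr
        exact not_lt.mp hv)
      nlinarith
  rw [integral_sub (hK.const_mul ε) ((hK.indicator hS).const_mul _), integral_const_mul,
    integral_const_mul, integral_indicator hS] at hlower
  have hu' : ∫ v, f ((u * (A / δ) - v) / (A / δ)) * K v < ε / 2 * ∫ v, K v := hu
  linarith

/-- A Tauberian theorem: a bounded, slowly decreasing function whose Laplace transform extends
continuously to the closed right half-plane tends to zero. -/
theorem tendsto_zero_of_laplace (hfm : Measurable f) (hM : ∀ t, |f t| ≤ M)
    (hf0 : ∀ t ≤ 0, f t = 0) (hΦc : ContinuousOn Φ {s | 0 ≤ s.re})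
    (hΦ : ∀ s : ℂ, 0 < s.re → ∫ t : ℝ, (f t : ℂ) * Complex.exp (-s * t) = Φ s)
    (hmono : ∀ s t, 0 < s → s ≤ t → 1 + f s ≤ (1 + f t) * Real.exp (t - s)) :
    Tendsto f atTop (𝓝 0) := by
  refine Metric.tendsto_nhds.mpr fun ε hε ↦ ?_
  obtain ⟨η, hη1, hη2, hη0, hη4⟩ : ∃ η : ℝ, (1 + η) * Real.exp (2 * η) < 1 + ε ∧
      1 - ε < (1 - η) * Real.exp (-(2 * η)) ∧ 0 < η ∧ η < 1 := by
    have h1 : Tendsto (fun η : ℝ ↦ (1 + η) * Real.exp (2 * η)) (𝓝[>] 0) (𝓝 1) := by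
      have : Continuous fun η : ℝ ↦ (1 + η) * Real.exp (2 * η) := by fun_prop
      simpa using (this.tendsto 0).mono_left nhdsWithin_le_nhds
    have h2 : Tendsto (fun η : ℝ ↦ (1 - η) * Real.exp (-(2 * η))) (𝓝[>] 0) (𝓝 1) := by
      have : Continuous fun η : ℝ ↦ (1 - η) * Real.exp (-(2 * η)) := by fun_prop
      simpa using (this.tendsto 0).mono_left nhdsWithin_le_nhds
    exact ((h1.eventually_lt_const (by linarith)).and
      ((h2.eventually_const_lt (by linarith)).and
        (Ioo_mem_nhdsGT (zero_lt_one (α := ℝ))))).exists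
  have hup := eventually_exists_near_lt hfm hM hf0 hΦc hΦ hη0 hη0
  have hlow := eventually_exists_near_lt (f := fun t ↦ -f t) (Φ := fun s ↦ -Φ s) hfm.neg
    (fun t ↦ by simpa using hM t) (fun t ht ↦ by simp [hf0 t ht]) hΦc.neg
    (fun s hs ↦ by simp [← hΦ s hs, integral_neg]) hη0 hη0
  have hshift (c : ℝ) : Tendsto (fun u : ℝ ↦ u + c) atTop atTop :=
    tendsto_atTop_add_const_right _ c tendsto_id
  filter_upwards [(hshift η).eventually hup, (hshift (-η)).eventually hlow,
    eventually_gt_atTop (2 * η)] with u ⟨t, ht, hft⟩ ⟨s, hs, hfs⟩ hu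
  rw [abs_le] at ht hs
  rw [Real.dist_0_eq_abs, abs_lt]
  constructor
  · have h := hmono s u (by linarith) (by linarith)
    have h' : (1 - η) * Real.exp (-(2 * η)) ≤ (1 + f s) * Real.exp (-(u - s)) := by
      gcongr <;> linarith
    have h'' : (1 + f s) * Real.exp (-(u - s)) ≤ 1 + f u := by
      rw [Real.exp_neg, ← div_eq_mul_inv, div_le_iff₀ (Real.exp_pos _)]
      exact h
    linarith
  · have h := hmono u t (by linarith) (by linarith)
    have h' : (1 + f t) * Real.exp (t - u) ≤ (1 + η) * Real.exp (2 * η) := by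
      gcongr
      linarith
    linarith

end Tauberian

section PrimeNumberTheorem

open MeasureTheory Topology Chebyshev

open ArithmeticFunction (vonMangoldt)

/-- The relative error `ψ x / x - 1` in the variable `t = log x`, cut off to `t > 0`. -/
noncomputable def psiError (t : ℝ) : ℝ := if 0 < t then ψ (Real.exp t) * Real.exp (-t) - 1 else 0

lemma psiError_of_pos {t : ℝ} (ht : 0 < t) :
    psiError t = ψ (Real.exp t) * Real.exp (-t) - 1 := if_pos ht

lemma measurable_psiError : Measurable psiError := by
  have := psi_mono.measurable
  exact Measurable.ite measurableSet_Ioi (by fun_prop) measurable_const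

lemma abs_psiError_le (t : ℝ) : |psiError t| ≤ Real.log 4 + 4 := by
  have hlog : 0 ≤ Real.log 4 := Real.log_nonneg (by norm_num)
  rcases le_or_gt t 0 with ht | ht
  · rw [psiError, if_neg ht.not_gt, abs_zero]
    positivity
  have hle : ψ (Real.exp t) * Real.exp (-t) ≤ Real.log 4 + 4 := by
    rw [Real.exp_neg, ← div_eq_mul_inv, div_le_iff₀ (Real.exp_pos t)]
    exact psi_le_const_mul_self (Real.exp_pos t).le
  have hnonneg : 0 ≤ ψ (Real.exp t) * Real.exp (-t) :=
    mul_nonneg (psi_nonneg _) (Real.exp_pos _).le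
  rw [psiError_of_pos ht, abs_le]
  constructor <;> linarith

lemma one_add_psiError_le {s t : ℝ} (hs : 0 < s) (hst : s ≤ t) :
    1 + psiError s ≤ (1 + psiError t) * Real.exp (t - s) := by
  rw [psiError_of_pos hs, psiError_of_pos (hs.trans_le hst), add_sub_cancel, add_sub_cancel,
    mul_assoc, ← Real.exp_add, show -t + (t - s) = -s by ring]
  gcongr

lemma LSeries_vonMangoldt_eq_laplace {s : ℂ} (hs : 0 < s.re) :
    LSeries (fun n ↦ (vonMangoldt n : ℂ)) (s + 1) =
      (s + 1) * ∫ t in Set.Ioi (0 : ℝ),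
        ((ψ (Real.exp t) * Real.exp (-t) : ℝ) : ℂ) * Complex.exp (-s * t) := by
  have hsum (x : ℝ) : ∑ k ∈ Finset.Icc 1 ⌊x⌋₊, vonMangoldt k = ψ x := by
    rw [psi, ← Finset.Icc_add_one_left_eq_Ioc, zero_add]
  have hO : (fun n : ℕ ↦ ∑ k ∈ Finset.Icc 1 n, vonMangoldt k) =O[atTop]
      fun n ↦ (n : ℝ) ^ (1 : ℝ) := by
    refine Asymptotics.IsBigO.of_bound (Real.log 4 + 4) (.of_forall fun n ↦ ?_)
    have := hsum n
    rw [Nat.floor_natCast] at this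
    rw [this, Real.norm_of_nonneg (psi_nonneg _), Real.rpow_one,
      Real.norm_of_nonneg n.cast_nonneg]
    exact psi_le_const_mul_self n.cast_nonneg
  rw [LSeries_eq_mul_integral_of_nonneg (fun n ↦ vonMangoldt n) zero_le_one (by simpa using hs) hO
    fun n ↦ ArithmeticFunction.vonMangoldt_nonneg, ← Real.exp_zero, ← integral_comp_exp_Ioi]
  congr 1
  refine setIntegral_congr_fun measurableSet_Ioi fun t _ ↦ ?_
  rw [← Complex.ofReal_sum, hsum, Complex.real_smul, Complex.cpow_def_of_ne_zero
    (by exact_mod_cast (Real.exp_pos t).ne'), ← Complex.ofReal_log (Real.exp_pos t).le,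
    Real.log_exp]
  push_cast
  rw [mul_left_comm, ← Complex.exp_add, mul_assoc, ← Complex.exp_add]
  ring_nf

open ArithmeticFunction.vonMangoldt in
lemma laplace_psiError {s : ℂ} (hs : 0 < s.re) :
    ∫ t : ℝ, (psiError t : ℂ) * Complex.exp (-s * t) =
      (LFunctionResidueClassAux (1 : ZMod 1) (s + 1) - 1) / (s + 1) := by
  have hs0 : s ≠ 0 := fun h ↦ by simp [h] at hs
  have hs1 : s + 1 ≠ 0 := fun h ↦ by
    have := congrArg Complex.re h
    simp only [Complex.add_re, Complex.one_re, Complex.zero_re] at this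
    linarith
  have hexp : IntegrableOn (fun t : ℝ ↦ Complex.exp (-s * t)) (Set.Ioi 0) :=
    integrableOn_exp_mul_complex_Ioi (by simpa using hs) 0
  have hint : Integrable fun t : ℝ ↦ (psiError t : ℂ) * Complex.exp (-s * t) :=
    integrable_mul_cexp_neg measurable_psiError abs_psiError_le
      (fun t ht ↦ if_neg ht.not_gt) hs
  have hlaplace : ∫ t in Set.Ioi (0 : ℝ),
      ((ψ (Real.exp t) * Real.exp (-t) : ℝ) : ℂ) * Complex.exp (-s * t) =
      (∫ t : ℝ, (psiError t : ℂ) * Complex.exp (-s * t)) + 1 / s := by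
    have hone : ∫ t in Set.Ioi (0 : ℝ), Complex.exp (-s * t) = 1 / s := by
      rw [integral_exp_mul_complex_Ioi (by simpa using hs)]
      simp
    have hcut : ∫ t in Set.Ioi (0 : ℝ), (psiError t : ℂ) * Complex.exp (-s * t) =
        ∫ t : ℝ, (psiError t : ℂ) * Complex.exp (-s * t) := by
      refine setIntegral_eq_integral_of_forall_compl_eq_zero fun t ht ↦ ?_
      rw [psiError, if_neg (show ¬ 0 < t from ht), Complex.ofReal_zero, zero_mul]
    rw [← hone, ← hcut, ← integral_add hint.integrableOn hexp]
    refine setIntegral_congr_fun measurableSet_Ioi fun t ht ↦ ?_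
    rw [psiError_of_pos ht]
    push_cast
    ring
  have hL := LSeries_vonMangoldt_eq_laplace hs
  have haux := eqOn_LFunctionResidueClassAux (q := 1) (a := 1) isUnit_one
    (show s + 1 ∈ {z : ℂ | 1 < z.re} by simpa using hs)
  have hres : (fun n : ℕ ↦ (residueClass (1 : ZMod 1) n : ℂ)) =
      fun n ↦ (vonMangoldt n : ℂ) := by
    funext n
    rw [residueClass, Set.indicator_of_mem (by exact Subsingleton.elim _ _)]
  simp only [hres, hL, hlaplace] at haux
  rw [haux]
  simp only [Nat.totient_one, Nat.cast_one, inv_one, add_sub_cancel_right]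
  field

lemma tendsto_psiError : Tendsto psiError atTop (𝓝 0) := by
  refine tendsto_zero_of_laplace measurable_psiError abs_psiError_le
    (fun t ht ↦ if_neg ht.not_gt) ?_ (fun s hs ↦ laplace_psiError hs)
    (fun s t ↦ one_add_psiError_le)
  refine ContinuousOn.div (ContinuousOn.sub ?_ continuousOn_const) (by fun_prop) fun s hs h ↦ ?_
  · refine (ArithmeticFunction.vonMangoldt.continuousOn_LFunctionResidueClassAux
      (1 : ZMod 1)).comp (by fun_prop) fun s hs ↦ ?_
    simpa using hs
  · have hre := congrArg Complex.re h
    simp only [Complex.add_re, Complex.one_re, Complex.zero_re] at hre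
    have : 0 ≤ s.re := hs
    linarith

/-- The prime number theorem for Chebyshev's function `ψ`. -/
theorem tendsto_psi_div_self : Tendsto (fun x : ℝ ↦ ψ x / x) atTop (𝓝 1) := by
  have h := (tendsto_psiError.comp Real.tendsto_log_atTop).add_const 1
  rw [zero_add] at h
  refine h.congr' ?_
  filter_upwards [eventually_gt_atTop 1] with x hx
  rw [Function.comp_apply, psiError_of_pos (Real.log_pos hx), Real.exp_neg,
    Real.exp_log (by linarith), sub_add_cancel, div_eq_mul_inv]

/-- The prime number theorem for Chebyshev's function `θ`. -/
theorem tendsto_theta_div_self : Tendsto (fun x : ℝ ↦ θ x / x) atTop (𝓝 1) := by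
  have hsqrt : (fun x : ℝ ↦ √x) =o[atTop] fun x : ℝ ↦ x := by
    refine Asymptotics.isLittleO_of_tendsto' ?_ ?_
    · filter_upwards [eventually_gt_atTop 0] with x hx h
      exact absurd h hx.ne'
    · exact (Real.tendsto_sqrt_atTop.inv_tendsto_atTop).congr fun x ↦ by
        rw [Pi.inv_apply, Real.sqrt_div_self', one_div]
  have h := tendsto_psi_div_self.sub
    (isBigO_psi_sub_theta_sqrt.trans_isLittleO hsqrt).tendsto_div_nhds_zero
  rw [sub_zero] at h
  refine h.congr fun x ↦ ?_
  rw [Pi.sub_apply]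
  ring

end PrimeNumberTheorem

section PrimeSums

open Topology Chebyshev

/-- The sum of the primes up to `n`. -/
noncomputable def primeSum (n : ℕ) : ℝ := ∑ k ∈ Finset.Icc 1 n, if k.Prime then (k : ℝ) else 0

/-- The sum of `p * log p` over the primes `p` up to `n`. -/
noncomputable def primeLogSum (n : ℕ) : ℝ :=
  ∑ k ∈ Finset.Icc 1 n, if k.Prime then (k : ℝ) * Real.log k else 0

lemma theta_natCast_succ (n : ℕ) :
    θ ((n + 1 : ℕ) : ℝ) = θ n + if (n + 1).Prime then Real.log ((n + 1 : ℕ) : ℝ) else 0 := by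
  have h (m : ℕ) : θ (m : ℝ) = ∑ k ∈ Finset.Icc 1 m, if k.Prime then Real.log k else 0 := by
    rw [theta, Nat.floor_natCast, ← Finset.Icc_add_one_left_eq_Ioc, zero_add, Finset.sum_filter]
  rw [h, h, Finset.sum_Icc_succ_top (by omega)]

lemma primeLogSum_eq (n : ℕ) :
    primeLogSum n = n * θ n - ∑ m ∈ Finset.range n, θ (m : ℝ) := by
  induction n with
  | zero => simp [primeLogSum]
  | succ n ih =>
    have hstep : primeLogSum (n + 1) = primeLogSum n +
        if (n + 1).Prime then ((n + 1 : ℕ) : ℝ) * Real.log ((n + 1 : ℕ) : ℝ) else 0 :=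
      Finset.sum_Icc_succ_top (by omega) _
    rw [hstep, ih, theta_natCast_succ, Finset.sum_range_succ]
    split_ifs <;> push_cast <;> ring

lemma tendsto_sum_theta_div_sq :
    Tendsto (fun n : ℕ ↦ (∑ m ∈ Finset.range n, θ (m : ℝ)) / (n : ℝ) ^ 2) atTop (𝓝 (1 / 2)) := by
  have hid (n : ℕ) : ∑ i ∈ Finset.range n, (i : ℝ) = (n : ℝ) * (n - 1) / 2 := by
    induction n with
    | zero => simp
    | succ n ih => rw [Finset.sum_range_succ, ih]; push_cast; ring
  have hid_lim : Tendsto (fun n : ℕ ↦ (∑ i ∈ Finset.range n, (i : ℝ)) / (n : ℝ) ^ 2) atTop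
      (𝓝 (1 / 2)) := by
    have h : Tendsto (fun n : ℕ ↦ (1 - (n : ℝ)⁻¹) / 2) atTop (𝓝 (1 / 2)) := by
      simpa using (tendsto_inv_atTop_nhds_zero_nat (𝕜 := ℝ)).const_sub 1 |>.div_const 2
    refine h.congr' ?_
    filter_upwards [eventually_gt_atTop 0] with n hn
    have : (n : ℝ) ≠ 0 := by positivity
    rw [hid]
    field
  have htop : Tendsto (fun n : ℕ ↦ ∑ i ∈ Finset.range n, (i : ℝ)) atTop atTop := by
    rw [← tendsto_add_atTop_iff_nat 1]
    refine tendsto_atTop_mono (fun n ↦ ?_) tendsto_natCast_atTop_atTop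
    rw [Finset.sum_range_succ]
    have : 0 ≤ ∑ i ∈ Finset.range n, (i : ℝ) := Finset.sum_nonneg fun i _ ↦ i.cast_nonneg
    linarith
  have hθ : (fun n : ℕ ↦ θ (n : ℝ) - n) =o[atTop] fun n : ℕ ↦ (n : ℝ) := by
    refine Asymptotics.isLittleO_of_tendsto' ?_ ?_
    · filter_upwards [eventually_gt_atTop 0] with n hn h
      exact absurd h (by positivity)
    · have h := (tendsto_theta_div_self.comp (tendsto_natCast_atTop_atTop (R := ℝ))).sub_const 1
      rw [sub_self] at h
      refine h.congr' ?_
      filter_upwards [eventually_gt_atTop 0] with n hn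
      have : (n : ℝ) ≠ 0 := by positivity
      rw [Function.comp_apply]
      field
  have hsum := (hθ.sum_range (fun n ↦ n.cast_nonneg) htop).tendsto_div_nhds_zero
  have h := (hsum.mul hid_lim).add hid_lim
  rw [zero_mul, zero_add] at h
  refine h.congr' ?_
  filter_upwards [eventually_gt_atTop 1] with n hn
  have hne : ∑ i ∈ Finset.range n, (i : ℝ) ≠ 0 := by
    have : (1 : ℝ) < n := by exact_mod_cast hn
    rw [hid]
    have : (n : ℝ) - 1 ≠ 0 := by linarith
    positivity
  rw [Finset.sum_sub_distrib]
  field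

lemma tendsto_primeLogSum_div_sq :
    Tendsto (fun n : ℕ ↦ primeLogSum n / (n : ℝ) ^ 2) atTop (𝓝 (1 / 2)) := by
  have h := (tendsto_theta_div_self.comp (tendsto_natCast_atTop_atTop (R := ℝ))).sub
    tendsto_sum_theta_div_sq
  rw [show (1 - 1 / 2 : ℝ) = 1 / 2 by norm_num] at h
  refine h.congr' ?_
  filter_upwards [eventually_gt_atTop 0] with n hn
  have : (n : ℝ) ≠ 0 := by positivity
  rw [primeLogSum_eq, Function.comp_apply]
  field

lemma primeLogSum_le (n : ℕ) : primeLogSum n ≤ primeSum n * Real.log n := by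
  rw [primeLogSum, primeSum, Finset.sum_mul]
  refine Finset.sum_le_sum fun k hk ↦ ?_
  obtain ⟨hk1, hkn⟩ := Finset.mem_Icc.mp hk
  split_ifs
  · gcongr
  · simp

lemma primeSum_le (n : ℕ) {y : ℝ} (hy : 1 < y) :
    primeSum n ≤ n * y + primeLogSum n / Real.log y := by
  have hlog : 0 < Real.log y := Real.log_pos hy
  calc primeSum n ≤ ∑ k ∈ Finset.Icc 1 n,
        (y + (if k.Prime then (k : ℝ) * Real.log k else 0) / Real.log y) := by
        refine Finset.sum_le_sum fun k hk ↦ ?_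
        have hk0 : (0 : ℝ) ≤ k := k.cast_nonneg
        split_ifs
        · rcases le_or_gt (k : ℝ) y with hky | hky
          · have : 0 ≤ (k : ℝ) * Real.log k / Real.log y :=
              div_nonneg (mul_nonneg hk0 (Real.log_natCast_nonneg k)) hlog.le
            linarith
          · have : (k : ℝ) ≤ k * Real.log k / Real.log y := by
              rw [le_div_iff₀ hlog]
              gcongr
            linarith
        · rw [zero_div]
          linarith
    _ = _ := by
        rw [Finset.sum_add_distrib, ← Finset.sum_div]
        simp [primeLogSum]

/-- The sum of the primes up to `n` is asymptotic to `n ^ 2 / (2 * log n)`. -/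
theorem tendsto_primeSum_div :
    Tendsto (fun n : ℕ ↦ primeSum n / ((n : ℝ) ^ 2 / (2 * Real.log n))) atTop (𝓝 1) := by
  have hlog : Tendsto (fun n : ℕ ↦ Real.log n) atTop atTop :=
    Real.tendsto_log_atTop.comp tendsto_natCast_atTop_atTop
  have hlower : Tendsto (fun n : ℕ ↦ 2 * (primeLogSum n / (n : ℝ) ^ 2)) atTop (𝓝 1) := by
    simpa using tendsto_primeLogSum_div_sq.const_mul 2
  have hratio : Tendsto (fun n : ℕ ↦ (1 - 2 * (Real.log (Real.log n) / Real.log n))⁻¹) atTop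
      (𝓝 1) := by
    have h := (Real.isLittleO_log_id_atTop.tendsto_div_nhds_zero.comp hlog).const_mul 2
    simpa using (h.const_sub 1).inv₀ (by simp)
  have hupper : Tendsto (fun n : ℕ ↦ 2 * (Real.log n)⁻¹ + 2 * (primeLogSum n / (n : ℝ) ^ 2) *
      (1 - 2 * (Real.log (Real.log n) / Real.log n))⁻¹) atTop (𝓝 1) := by
    simpa using (hlog.inv_tendsto_atTop.const_mul 2).add (hlower.mul hratio)
  have hy : Tendsto (fun n : ℕ ↦ (n : ℝ) / Real.log n ^ 2) atTop atTop := by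
    have h := (Real.tendsto_pow_log_div_mul_add_atTop 1 0 2 one_ne_zero)
    have hpos : ∀ᶠ x : ℝ in atTop, 0 < Real.log x ^ 2 / (1 * x + 0) := by
      filter_upwards [eventually_gt_atTop 1] with x hx
      have := Real.log_pos hx
      positivity
    have h' := (tendsto_nhdsWithin_iff.mpr ⟨h, hpos⟩).inv_tendsto_nhdsGT_zero
    refine (h'.comp (tendsto_natCast_atTop_atTop (R := ℝ))).congr fun n ↦ ?_
    simp
  refine tendsto_of_tendsto_of_tendsto_of_le_of_le' hlower hupper ?_ ?_
  · filter_upwards [eventually_gt_atTop 1] with n hn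
    have hn0 : (0 : ℝ) < n := by positivity
    have hL : 0 < Real.log n := Real.log_pos (by exact_mod_cast hn)
    have := primeLogSum_le n
    rw [div_div_eq_mul_div, ← mul_div_assoc]
    exact div_le_div_of_nonneg_right (by linarith) (sq_nonneg _)
  · filter_upwards [eventually_gt_atTop 1, hy.eventually_gt_atTop 1] with n hn hyn
    have hn0 : (0 : ℝ) < n := by positivity
    have hL : 0 < Real.log n := Real.log_pos (by exact_mod_cast hn)
    have hlogy : Real.log (n / Real.log n ^ 2) =
        Real.log n * (1 - 2 * (Real.log (Real.log n) / Real.log n)) := by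
      rw [Real.log_div hn0.ne' (by positivity), Real.log_pow]
      push_cast
      field
    have hle := primeSum_le n hyn
    have hpos := Real.log_pos hyn
    rw [hlogy] at hle hpos
    have hfac := (pos_iff_pos_of_mul_pos hpos).mp hL
    set c := 1 - 2 * (Real.log (Real.log n) / Real.log n)
    calc primeSum n / ((n : ℝ) ^ 2 / (2 * Real.log n))
        ≤ (n * (n / Real.log n ^ 2) + primeLogSum n / (Real.log n * c)) /
          ((n : ℝ) ^ 2 / (2 * Real.log n)) := by gcongr
      _ = _ := by field

end PrimeSums

section LeastPrimeFactor

open Topology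

lemma abs_tn_sub_le {k : ℕ} (hk : 1 ≤ k) :
    |(tn k : ℝ) - if k.Prime then (k : ℝ) else 0| ≤ 2 * √k := by
  have hsqrt : 1 ≤ √(k : ℝ) := Real.one_le_sqrt.mpr (by exact_mod_cast hk)
  by_cases hp : k.Prime
  · rw [tn, if_pos hp, if_pos hp, Nat.cast_sub hk, Nat.cast_one]
    rw [sub_sub_cancel_left, abs_neg, abs_one]
    linarith
  · rw [tn, if_neg hp, if_neg hp, sub_zero, Nat.abs_cast]
    have hmin : (k.minFac : ℝ) ≤ √k := by
      refine Real.le_sqrt_of_sq_le ?_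
      exact_mod_cast Nat.minFac_sq_le_self hk hp
    have : ((k.minFac - 1 : ℕ) : ℝ) ≤ k.minFac := by exact_mod_cast Nat.sub_le _ _
    push_cast
    linarith

lemma abs_sum_tn_sub_primeSum_le {n : ℕ} (hn : 1 ≤ n) :
    |∑ k ∈ Finset.Icc 2 n, (tn k : ℝ) - primeSum n| ≤ n * (2 * √n) := by
  have hsum : ∑ k ∈ Finset.Icc 2 n, (tn k : ℝ) = ∑ k ∈ Finset.Icc 1 n, (tn k : ℝ) := by
    rw [← Finset.insert_Icc_add_one_left_eq_Icc hn, Finset.sum_insert (by simp)]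
    simp [tn]
  rw [hsum, primeSum, ← Finset.sum_sub_distrib]
  refine (Finset.abs_sum_le_sum_abs _ _).trans ?_
  have := Finset.sum_le_card_nsmul (Finset.Icc 1 n)
    (fun k ↦ |(tn k : ℝ) - if k.Prime then (k : ℝ) else 0|) (2 * √n) fun k hk ↦ by
      obtain ⟨hk1, hkn⟩ := Finset.mem_Icc.mp hk
      refine (abs_tn_sub_le hk1).trans ?_
      gcongr
  simpa using this

lemma tendsto_sum_tn_div :
    Tendsto (fun n : ℕ ↦ (∑ k ∈ Finset.Icc 2 n, (tn k : ℝ)) / ((n : ℝ) ^ 2 / (2 * Real.log n)))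
      atTop (𝓝 1) := by
  have herr : Tendsto (fun n : ℕ ↦ (∑ k ∈ Finset.Icc 2 n, (tn k : ℝ) - primeSum n) /
      ((n : ℝ) ^ 2 / (2 * Real.log n))) atTop (𝓝 0) := by
    have hlog : Tendsto (fun n : ℕ ↦ 4 * (Real.log n / √n)) atTop (𝓝 0) := by
      have h := (isLittleO_log_rpow_atTop (show (0 : ℝ) < 1 / 2 by norm_num)).tendsto_div_nhds_zero
      simp_rw [← Real.sqrt_eq_rpow] at h
      simpa using (h.comp (tendsto_natCast_atTop_atTop (R := ℝ))).const_mul 4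
    refine squeeze_zero_norm' ?_ hlog
    filter_upwards [eventually_gt_atTop 1] with n hn
    have hn0 : (0 : ℝ) < n := by positivity
    have hL : 0 < Real.log n := Real.log_pos (by exact_mod_cast hn)
    have hs : 0 < √(n : ℝ) := Real.sqrt_pos.mpr hn0
    have hss : (n : ℝ) = √n ^ 2 := (Real.sq_sqrt hn0.le).symm
    rw [norm_div, Real.norm_of_nonneg (show 0 ≤ (n : ℝ) ^ 2 / (2 * Real.log n) by positivity),
      Real.norm_eq_abs]
    calc _ ≤ n * (2 * √n) / ((n : ℝ) ^ 2 / (2 * Real.log n)) := by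
          gcongr
          exact abs_sum_tn_sub_primeSum_le hn.le
      _ = 4 * (Real.log n / (n / √n)) := by field
      _ = _ := by rw [Real.div_sqrt]
  have h := herr.add tendsto_primeSum_div
  rw [zero_add] at h
  refine h.congr fun n ↦ ?_
  ring

end LeastPrimeFactor

theorem partial_sums_asymptotics :
    Tendsto (fun n : ℕ =>
        (∑ k ∈ Finset.Icc 2 n, (tn k : ℝ)) / ((n : ℝ) ^ 2 / (2 * Real.log n)))
      atTop (nhds 1) ∧
    Tendsto (fun n : ℕ =>
        (2 / ((n : ℝ) ^ 2 - n)) * ∑ k ∈ Finset.Icc 2 n, (tn k : ℝ))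
      atTop (nhds 0) := by
  refine ⟨tendsto_sum_tn_div, ?_⟩
  have hlog : Tendsto (fun n : ℕ ↦ (Real.log n)⁻¹) atTop (nhds 0) :=
    (Real.tendsto_log_atTop.comp tendsto_natCast_atTop_atTop).inv_tendsto_atTop
  have hinv : Tendsto (fun n : ℕ ↦ (1 - (n : ℝ)⁻¹)⁻¹) atTop (nhds 1) := by
    simpa using ((tendsto_inv_atTop_nhds_zero_nat (𝕜 := ℝ)).const_sub 1).inv₀ (by simp)
  have h := (tendsto_sum_tn_div.mul hlog).mul hinv
  rw [mul_zero, zero_mul] at h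
  refine h.congr' ?_
  filter_upwards [eventually_gt_atTop 1] with n hn
  have hn1 : (1 : ℝ) < n := by exact_mod_cast hn
  have hL : Real.log n ≠ 0 := (Real.log_pos hn1).ne'
  have hsub : (n : ℝ) - 1 ≠ 0 := by linarith
  rw [show (n : ℝ) ^ 2 - n = n * (n - 1) by ring,
    show (1 : ℝ) - (n : ℝ)⁻¹ = (n - 1) / n by field]
  field
end
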